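/- Let H be a finite graph that is bicycle-free at radius r. The number of singleton-free k-hikes in H whose hike graph is exactly H is at most (r·|V(H)|)^{⌈2k/r⌉}. -/

import Mathlib

open scoped Classical

noncomputable section

/-- The ball of radius `r` about `v` in `G` (within the connected component of `v`). -/
def gBall {V : Type*} (G : SimpleGraph V) (v : V) (r : ℕ) : Set V :=
  {u | G.Reachable v u ∧ G.dist v u ≤ r}

/-- `G` is bicycle-free at radius `r`: the subgraph induced on every ball of radius `r`
has at most as many edges as vertices. -/
def BicycleFree {V : Type*} (G : SimpleGraph V) (r : ℕ) : Prop :=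
  ∀ v : V,
    (G.edgeSet ∩ {e : Sym2 V | ∀ x ∈ e, x ∈ gBall G v r}).ncard ≤ (gBall G v r).ncard

/-- A `k`-hike in `G`: a closed walk `v₀, …, v_{2k}` with `v₀ = v_{2k}` in which every
step except possibly the `(k+1)`-st is non-backtracking. -/
def IsHike {V : Type*} (G : SimpleGraph V) (k : ℕ) (f : Fin (2 * k + 1) → V) : Prop :=
  (∀ (i : ℕ) (h : i < 2 * k), G.Adj (f ⟨i, by omega⟩) (f ⟨i + 1, by omega⟩)) ∧
  f ⟨2 * k, by omega⟩ = f ⟨0, by omega⟩ ∧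
  ∀ (i : ℕ) (h1 : 1 ≤ i) (h2 : i < 2 * k), i ≠ k → f ⟨i + 1, by omega⟩ ≠ f ⟨i - 1, by omega⟩

/-- The number of steps of the closed walk `f` traversing the undirected edge `e`. -/
def edgeCount {V : Type*} [DecidableEq V] (k : ℕ) (f : Fin (2 * k + 1) → V)
    (e : Sym2 V) : ℕ :=
  (Finset.univ.filter fun i : Fin (2 * k) =>
    s(f ⟨i.1, Nat.lt_succ_of_lt i.2⟩, f ⟨i.1 + 1, Nat.succ_lt_succ i.2⟩) = e).card

/-- A hike is singleton-free if no edge is traversed exactly once. -/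
def IsSingletonFree {V : Type*} [DecidableEq V] (k : ℕ) (f : Fin (2 * k + 1) → V) : Prop :=
  ∀ e : Sym2 V, edgeCount k f e ≠ 1

/-- Non-backtracking walk of length `l`. -/
def NBW {W : Type*} (H : SimpleGraph W) (l : ℕ) (g : ℕ → W) : Prop :=
  (∀ i < l, H.Adj (g i) (g (i + 1))) ∧ ∀ i, i + 1 < l → g (i + 2) ≠ g i

lemma NBW.sub {W : Type*} {H : SimpleGraph W} {l : ℕ} {g : ℕ → W} (h : NBW H l g)
    (a m : ℕ) (ham : a + m ≤ l) : NBW H m (fun i => g (a + i)) := by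
  refine ⟨fun i hi => ?_, fun i hi => ?_⟩
  · have := h.1 (a + i) (by omega)
    simpa [add_assoc] using this
  · have := h.2 (a + i) (by omega)
    simpa [add_assoc] using this

lemma NBW.tree {W : Type*} {H T : SimpleGraph W} {l : ℕ} {g : ℕ → W} (h : NBW H l g)
    (hT : ∀ i < l, T.Adj (g i) (g (i + 1))) : NBW T l g := ⟨hT, h.2⟩

lemma exists_walk {W : Type*} (T : SimpleGraph W) (l : ℕ) : ∀ g : ℕ → W,
    (∀ i < l, T.Adj (g i) (g (i + 1))) →
    ∃ p : T.Walk (g 0) (g l), p.length = l ∧ (∀ i ≤ l, p.getVert i = g i) ∧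
      p.edges = (List.range l).map (fun i => s(g i, g (i + 1))) := by
  induction l with
  | zero => intro g _; exact ⟨SimpleGraph.Walk.nil, by simp, by simp, by simp⟩
  | succ l ih =>
    intro g hg
    obtain ⟨p, h1, h2, h3⟩ := ih (fun i => g (i + 1)) (fun i hi => hg (i + 1) (by omega))
    refine ⟨SimpleGraph.Walk.cons (hg 0 (by omega)) p, by simp [h1], ?_, ?_⟩
    · intro i hi
      cases i with
      | zero => simp
      | succ i => simpa using h2 i (by omega)
    · rw [SimpleGraph.Walk.edges_cons, h3, List.range_succ_eq_map]
      simp [Function.comp_def]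

lemma NBW.exists_path {W : Type*} {T : SimpleGraph W} (hT : T.IsAcyclic) {l : ℕ} {g : ℕ → W}
    (h : NBW T l g) :
    ∃ p : T.Walk (g 0) (g l), p.IsPath ∧ p.length = l ∧ (∀ i ≤ l, p.getVert i = g i) := by
  obtain ⟨p, h1, h2, h3⟩ := exists_walk T l g h.1
  refine ⟨p, ?_, h1, h2⟩
  rw [hT.isPath_iff_isChain, h3, List.isChain_iff_getElem]
  intro i hi
  simp only [List.length_map, List.length_range] at hi
  simp only [List.getElem_map, List.getElem_range]
  intro he
  have hne := h.2 i hi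
  have ha := (h.1 i (by omega)).ne
  rw [Sym2.eq_iff] at he
  rcases he with ⟨h4, _⟩ | ⟨h4, _⟩
  · exact ha h4
  · exact hne h4.symm

lemma tree_dist {W : Type*} {T : SimpleGraph W} (hT : T.IsAcyclic) {l : ℕ} {g : ℕ → W}
    (h : NBW T l g) : T.dist (g 0) (g l) = l := by
  obtain ⟨p, h1, h2, -⟩ := h.exists_path hT
  obtain ⟨p', h1', h2'⟩ := p.reachable.exists_path_of_dist
  have := (hT.subsingleton_path _ _).elim ⟨p, h1⟩ ⟨p', h1'⟩
  have : p = p' := congrArg Subtype.val this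
  rw [← h2', ← this, h2]

lemma tree_unique {W : Type*} {T : SimpleGraph W} (hT : T.IsAcyclic) {l : ℕ} {g g' : ℕ → W}
    (h : NBW T l g) (h' : NBW T l g') (h0 : g 0 = g' 0) (hl : g l = g' l) :
    ∀ i ≤ l, g i = g' i := by
  obtain ⟨p, h1, h2, h3⟩ := h.exists_path hT
  obtain ⟨p', h1', h2', h3'⟩ := h'.exists_path hT
  have h4 := (hT.subsingleton_path _ _).elim ⟨p, h1⟩ ⟨p'.copy h0.symm hl.symm, by simpa using h1'⟩
  have h5 : p = p'.copy h0.symm hl.symm := congrArg Subtype.val h4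
  intro i hi
  rw [← h3 i hi, ← h3' i hi, h5]
  simp

/-- Walk in `T` plus the directed edge `x → y`. -/
def PW {W : Type*} (H T : SimpleGraph W) (x y : W) (l : ℕ) (g : ℕ → W) : Prop :=
  NBW H l g ∧ ∀ i < l, T.Adj (g i) (g (i + 1)) ∨ (g i = x ∧ g (i + 1) = y)

lemma PW.sub {W : Type*} {H T : SimpleGraph W} {x y : W} {l : ℕ} {g : ℕ → W}
    (h : PW H T x y l g) (a m : ℕ) (ham : a + m ≤ l) : PW H T x y m (fun i => g (a + i)) := by
  refine ⟨h.1.sub a m ham, fun i hi => ?_⟩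
  have := h.2 (a + i) (by omega)
  simpa [add_assoc] using this

lemma PW.first {W : Type*} {H T : SimpleGraph W} (hT : T.IsAcyclic) {x y : W} {l : ℕ} {g : ℕ → W}
    (h : PW H T x y l g) (hc : ∃ i < l, ¬ T.Adj (g i) (g (i + 1))) :
    ∃ t < l, NBW T t g ∧ g t = x ∧ g (t + 1) = y ∧ T.dist (g 0) x = t := by
  classical
  let t := Nat.find hc
  have ht := Nat.find_spec hc
  have hm : ∀ i < t, T.Adj (g i) (g (i + 1)) := by
    intro i hi
    have := Nat.find_min hc hi
    by_contra h6
    exact this ⟨by have := ht.1; omega, h6⟩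
  have h1 : NBW T t g := ⟨hm, fun i hi => h.1.2 i (by have := ht.1; omega)⟩
  have h2 := (h.2 t ht.1).resolve_left ht.2
  refine ⟨t, ht.1, h1, h2.1, h2.2, ?_⟩
  have := tree_dist hT h1
  rwa [h2.1] at this

lemma PW.lb {W : Type*} {H T : SimpleGraph W} (hT : T.IsAcyclic) {x y : W} (l : ℕ) :
    ∀ g : ℕ → W, PW H T x y l g → g 0 = y → T.dist y (g l) ≤ l := by
  induction l using Nat.strong_induction_on with
  | _ l ih =>
    intro g h h0
    by_cases hc : ∃ i < l, ¬ T.Adj (g i) (g (i + 1))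
    · obtain ⟨t, ht, -, h1, h2, -⟩ := h.first hT hc
      have := ih (l - (t + 1)) (by omega) (fun i => g (t + 1 + i)) (h.sub _ _ (by omega)) h2
      rw [show t + 1 + (l - (t + 1)) = l by omega] at this
      omega
    · push Not at hc
      have := tree_dist hT (h.1.tree hc)
      rw [h0] at this
      omega

lemma PW.uniq_y {W : Type*} {H T : SimpleGraph W} (hT : T.IsAcyclic) {x y : W} (l : ℕ) :
    ∀ g g' : ℕ → W, PW H T x y l g → PW H T x y l g' → g 0 = y → g' 0 = y → g l = g' l →
      ∀ i ≤ l, g i = g' i := by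
  induction l using Nat.strong_induction_on with
  | _ l ih =>
    have key : ∀ g g' : ℕ → W, PW H T x y l g → PW H T x y l g' → g 0 = y → g' 0 = y →
        g l = g' l → (∃ i < l, ¬ T.Adj (g i) (g (i + 1))) →
        (∀ i < l, T.Adj (g' i) (g' (i + 1))) → False := by
      intro g g' h h' h0 h0' hl hc hc'
      obtain ⟨t, ht, -, h1, h2, -⟩ := h.first hT hc
      have := PW.lb hT (l - (t + 1)) (fun i => g (t + 1 + i)) (h.sub _ _ (by omega)) h2
      rw [show t + 1 + (l - (t + 1)) = l by omega] at this
      have h3 := tree_dist hT (h'.1.tree hc')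
      rw [h0', ← hl] at h3
      omega
    intro g g' h h' h0 h0' hl
    by_cases hc : ∃ i < l, ¬ T.Adj (g i) (g (i + 1))
    · by_cases hc' : ∃ i < l, ¬ T.Adj (g' i) (g' (i + 1))
      · obtain ⟨t, ht, h1, h2, h3, h4⟩ := h.first hT hc
        obtain ⟨t', ht', h1', h2', h3', h4'⟩ := h'.first hT hc'
        rw [h0] at h4
        rw [h0'] at h4'
        obtain rfl : t = t' := by omega
        intro i hi
        by_cases hit : i ≤ t
        · exact tree_unique hT h1 h1' (h0.trans h0'.symm) (h2.trans h2'.symm) i hit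
        · have := ih (l - (t + 1)) (by omega) (fun i => g (t + 1 + i)) (fun i => g' (t + 1 + i))
            (h.sub _ _ (by omega)) (h'.sub _ _ (by omega)) h3 h3'
            (by rw [show t + 1 + (l - (t + 1)) = l by omega]; exact hl)
            (i - (t + 1)) (by omega)
          rwa [show t + 1 + (i - (t + 1)) = i by omega] at this
      · push Not at hc'
        exact (key g g' h h' h0 h0' hl hc hc').elim
    · by_cases hc' : ∃ i < l, ¬ T.Adj (g' i) (g' (i + 1))
      · push Not at hc
        exact (key g' g h' h h0' h0 hl.symm hc' hc).elim
      · push Not at hc hc'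
        exact tree_unique hT (h.1.tree hc) (h'.1.tree hc') (h0.trans h0'.symm) hl

lemma PW.uniq {W : Type*} {H T : SimpleGraph W} (hT : T.IsAcyclic) {x y : W} {l : ℕ}
    {g g' : ℕ → W} (h : PW H T x y l g) (h' : PW H T x y l g') (h0 : g 0 = g' 0)
    (hl : g l = g' l) (hc : ∃ i < l, ¬ T.Adj (g i) (g (i + 1)))
    (hc' : ∃ i < l, ¬ T.Adj (g' i) (g' (i + 1))) :
    ∀ i ≤ l, g i = g' i := by
  obtain ⟨t, ht, h1, h2, h3, h4⟩ := h.first hT hc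
  obtain ⟨t', ht', h1', h2', h3', h4'⟩ := h'.first hT hc'
  rw [h0] at h4
  obtain rfl : t = t' := by omega
  intro i hi
  by_cases hit : i ≤ t
  · exact tree_unique hT h1 h1' h0 (h2.trans h2'.symm) i hit
  · have := PW.uniq_y hT (l - (t + 1)) (fun i => g (t + 1 + i)) (fun i => g' (t + 1 + i))
      (h.sub _ _ (by omega)) (h'.sub _ _ (by omega)) h3 h3'
      (by rw [show t + 1 + (l - (t + 1)) = l by omega]; exact hl)
      (i - (t + 1)) (by omega)
    rwa [show t + 1 + (i - (t + 1)) = i by omega] at this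

lemma no_opp {W : Type*} {H T : SimpleGraph W} (hT : T.IsAcyclic) {x y : W}
    (hH : ∀ a b, H.Adj a b → T.Adj a b ∨ (a = x ∧ b = y) ∨ (a = y ∧ b = x)) {l : ℕ}
    {g : ℕ → W} (h : NBW H l g) (n : ℕ) : ∀ i j, j - i = n → i < j → j < l →
      g i = x → g (i + 1) = y → g j = y → g (j + 1) = x → False := by
  induction n using Nat.strong_induction_on with
  | _ n ih =>
    intro i j hn hij hjl h1 h2 h3 h4
    by_cases hc : ∃ m, i < m ∧ m < j ∧ ¬ T.Adj (g m) (g (m + 1))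
    · obtain ⟨m, hm1, hm2, hm3⟩ := hc
      rcases (hH _ _ (h.1 m (by omega))).resolve_left hm3 with h5 | h5
      · exact ih (j - m) (by omega) m j rfl hm2 hjl h5.1 h5.2 h3 h4
      · exact ih (m - i) (by omega) i m rfl hm1 (by omega) h1 h2 h5.1 h5.2
    · push Not at hc
      have h5 : NBW T (j - (i + 1)) (fun a => g (i + 1 + a)) := by
        refine (h.sub (i + 1) (j - (i + 1)) (by omega)).tree fun a ha => ?_
        exact hc (i + 1 + a) (by omega) (by omega)
      have h6 := tree_dist hT h5
      simp only [add_zero] at h6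
      rw [show i + 1 + (j - (i + 1)) = j by omega, h2, h3, SimpleGraph.dist_self] at h6
      obtain rfl : j = i + 1 := by omega
      exact h.2 i hjl (h4.trans h1.symm)

lemma class3 {W : Type*} {H T : SimpleGraph W} (hT : T.IsAcyclic) {x y : W}
    (hH : ∀ a b, H.Adj a b → T.Adj a b ∨ (a = x ∧ b = y) ∨ (a = y ∧ b = x)) {l : ℕ}
    {g : ℕ → W} (h : NBW H l g) : NBW T l g ∨
      ((∃ i < l, ¬ T.Adj (g i) (g (i + 1))) ∧ (PW H T x y l g ∨ PW H T y x l g)) := by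
  by_cases hc : ∃ i < l, ¬ T.Adj (g i) (g (i + 1))
  · right
    refine ⟨hc, ?_⟩
    have hH' : ∀ a b, H.Adj a b → T.Adj a b ∨ (a = y ∧ b = x) ∨ (a = x ∧ b = y) :=
      fun a b hab => (hH a b hab).imp_right Or.symm
    obtain ⟨i, hi, hi'⟩ := hc
    rcases (hH _ _ (h.1 i hi)).resolve_left hi' with h5 | h5
    · left
      refine ⟨h, fun j hj => ?_⟩
      rcases hH _ _ (h.1 j hj) with h6 | h6 | h6
      · exact Or.inl h6
      · exact Or.inr h6
      · exfalso
        rcases lt_trichotomy i j with hij | rfl | hij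
        · exact no_opp hT hH h _ i j rfl hij hj h5.1 h5.2 h6.1 h6.2
        · exact (h.1 i hi).ne (h5.1.trans h6.2.symm)
        · exact no_opp hT hH' h _ j i rfl hij hi h6.1 h6.2 h5.1 h5.2
    · right
      refine ⟨h, fun j hj => ?_⟩
      rcases hH _ _ (h.1 j hj) with h6 | h6 | h6
      · exact Or.inl h6
      · exfalso
        rcases lt_trichotomy i j with hij | rfl | hij
        · exact no_opp hT hH' h _ i j rfl hij hj h5.1 h5.2 h6.1 h6.2
        · exact (h.1 i hi).ne (h5.1.trans h6.2.symm)
        · exact no_opp hT hH h _ j i rfl hij hi h6.1 h6.2 h5.1 h5.2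
      · exact Or.inr h6
  · push Not at hc
    exact Or.inl (h.tree hc)

lemma PW.lb2 {W : Type*} {H T : SimpleGraph W} (hT : T.IsAcyclic) {x y : W} {l : ℕ} {g : ℕ → W}
    (h : PW H T x y l g) (hc : ∃ i < l, ¬ T.Adj (g i) (g (i + 1))) :
    T.dist (g 0) x + 1 + T.dist y (g l) ≤ l := by
  obtain ⟨t, ht, -, h1, h2, h3⟩ := h.first hT hc
  have := PW.lb hT (l - (t + 1)) (fun i => g (t + 1 + i)) (h.sub _ _ (by omega)) h2
  rw [show t + 1 + (l - (t + 1)) = l by omega] at this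
  omega

/-- All three classes cannot coexist. -/
lemma no_three {W : Type*} {H T : SimpleGraph W} (hT : T.IsTree) {x y : W} {l : ℕ}
    {g1 g2 g3 : ℕ → W} (h1 : NBW T l g1) (h2 : PW H T x y l g2)
    (hc2 : ∃ i < l, ¬ T.Adj (g2 i) (g2 (i + 1))) (h3 : PW H T y x l g3)
    (hc3 : ∃ i < l, ¬ T.Adj (g3 i) (g3 (i + 1))) (h12 : g1 0 = g2 0) (h13 : g1 0 = g3 0)
    (e12 : g1 l = g2 l) (e13 : g1 l = g3 l) : False := by
  have a1 := tree_dist hT.isAcyclic h1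
  have a2 := h2.lb2 hT.isAcyclic hc2
  have a3 := h3.lb2 hT.isAcyclic hc3
  rw [← h12, ← e12] at a2
  rw [← h13, ← e13] at a3
  have b1 := hT.connected.dist_triangle (u := g1 0) (v := x) (w := g1 l)
  have b2 := hT.connected.dist_triangle (u := g1 0) (v := y) (w := g1 l)
  omega

lemma two_of_three {W : Type*} {H T : SimpleGraph W} (hT : T.IsTree) {x y : W}
    (hH : ∀ a b, H.Adj a b → T.Adj a b ∨ (a = x ∧ b = y) ∨ (a = y ∧ b = x)) {l : ℕ}
    {g1 g2 g3 : ℕ → W} (h1 : NBW H l g1) (h2 : NBW H l g2) (h3 : NBW H l g3)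
    (h12 : g1 0 = g2 0) (h13 : g1 0 = g3 0) (e12 : g1 l = g2 l) (e13 : g1 l = g3 l) :
    (∀ i ≤ l, g1 i = g2 i) ∨ (∀ i ≤ l, g1 i = g3 i) ∨ (∀ i ≤ l, g2 i = g3 i) := by
  have hA := hT.isAcyclic
  have h23 : g2 0 = g3 0 := h12.symm.trans h13
  have e23 : g2 l = g3 l := e12.symm.trans e13
  rcases class3 hA hH h1 with c1 | ⟨d1, c1 | c1⟩ <;>
  rcases class3 hA hH h2 with c2 | ⟨d2, c2 | c2⟩ <;>
  rcases class3 hA hH h3 with c3 | ⟨d3, c3 | c3⟩ <;>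
  first
  | exact Or.inl (tree_unique hA c1 c2 h12 e12)
  | exact Or.inl (PW.uniq hA c1 c2 h12 e12 d1 d2)
  | exact Or.inr (Or.inl (tree_unique hA c1 c3 h13 e13))
  | exact Or.inr (Or.inl (PW.uniq hA c1 c3 h13 e13 d1 d3))
  | exact Or.inr (Or.inr (tree_unique hA c2 c3 h23 e23))
  | exact Or.inr (Or.inr (PW.uniq hA c2 c3 h23 e23 d2 d3))
  | exact (no_three hT c1 c2 d2 c3 d3 h12 h13 e12 e13).elim
  | exact (no_three hT c1 c3 d3 c2 d2 h13 h12 e13 e12).elim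
  | exact (no_three hT c2 c1 d1 c3 d3 h12.symm h23 e12.symm e23).elim
  | exact (no_three hT c2 c3 d3 c1 d1 h23 h12.symm e23 e12.symm).elim
  | exact (no_three hT c3 c1 d1 c2 d2 h13.symm h23.symm e13.symm e23.symm).elim

lemma exists_tree {W : Type*} [Finite W] {H : SimpleGraph W} (hc : H.Connected)
    (hE : H.edgeSet.ncard ≤ Nat.card W) : ∃ (T : SimpleGraph W) (x y : W), T.IsTree ∧
      ∀ a b, H.Adj a b → T.Adj a b ∨ (a = x ∧ b = y) ∨ (a = y ∧ b = x) := by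
  classical
  have := Fintype.ofFinite W
  obtain ⟨T, hTH, hT⟩ := hc.exists_isTree_le
  have h1 := hT.card_edgeFinset
  have h2 : T.edgeSet.ncard + 1 = Nat.card W := by
    rw [Nat.card_eq_fintype_card, ← h1, ← SimpleGraph.coe_edgeFinset, Set.ncard_coe_finset]
  have h3 : (H.edgeSet \ T.edgeSet).ncard ≤ 1 := by
    rw [Set.ncard_sdiff (SimpleGraph.edgeSet_mono hTH)]
    omega
  rw [Set.ncard_le_one_iff] at h3
  have := hc.nonempty
  by_cases hex : ∃ a b, H.Adj a b ∧ ¬ T.Adj a b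
  · obtain ⟨x, y, h4, h5⟩ := hex
    refine ⟨T, x, y, hT, fun a b hab => ?_⟩
    by_cases h6 : T.Adj a b
    · exact Or.inl h6
    · right
      have := h3 (a := s(a, b)) (b := s(x, y)) ⟨by simpa using hab, by simpa using h6⟩
        ⟨by simpa using h4, by simpa using h5⟩
      simpa using this
  · push Not at hex
    let x := Classical.arbitrary W
    exact ⟨T, x, x, hT, fun a b hab => Or.inl (hex a b hab)⟩

lemma ball_connected {V : Type*} (G : SimpleGraph V) (u : V) (r : ℕ) :
    (G.induce (gBall G u r)).Connected := by
  refine SimpleGraph.induce_connected_of_patches u ⟨SimpleGraph.Reachable.refl _, by simp⟩ ?_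
  rintro v ⟨hv, hd⟩
  obtain ⟨p, hp⟩ := hv.exists_walk_length_eq_dist
  refine ⟨{z | z ∈ p.support}, ?_, by simp, by simp, p.connected_induce_support _ _⟩
  intro z hz
  have hz : z ∈ p.support := hz
  refine ⟨⟨p.takeUntil z hz⟩, ?_⟩
  have h1 := SimpleGraph.dist_le (p.takeUntil z hz)
  have h2 := p.length_takeUntil_le_length hz
  omega

lemma ball_edges {V : Type*} [Finite V] {G : SimpleGraph V} {r : ℕ} (hbf : BicycleFree G r) (u : V) :
    (G.induce (gBall G u r)).edgeSet.ncard ≤ Nat.card (gBall G u r) := by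
  have h := hbf u
  rw [Nat.card_coe_set_eq]
  refine le_trans ?_ h
  refine Set.ncard_le_ncard_of_injOn (Sym2.map Subtype.val) ?_
    (Sym2.map.injective Subtype.val_injective).injOn
  intro e
  induction e with
  | _ a b =>
    intro hab
    simp only [SimpleGraph.mem_edgeSet, SimpleGraph.comap_adj] at hab
    simp only [Sym2.map_mk, Set.mem_inter_iff, SimpleGraph.mem_edgeSet, Set.mem_ofPred_eq]
    refine ⟨hab, ?_⟩
    intro x hx
    rcases Sym2.mem_iff.1 hx with rfl | rfl
    · exact a.2
    · exact b.2

lemma walk_mem_ball {V : Type*} {G : SimpleGraph V} {l : ℕ} {g : ℕ → V}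
    (h : ∀ i < l, G.Adj (g i) (g (i + 1))) {i : ℕ} (hi : i ≤ l) {r : ℕ} (hr : l ≤ r) :
    g i ∈ gBall G (g 0) r := by
  obtain ⟨p, hp, -⟩ := exists_walk G i g (fun j hj => h j (by omega))
  exact ⟨⟨p⟩, (SimpleGraph.dist_le p).trans (by omega)⟩

lemma NBW.lift {V : Type*} {G : SimpleGraph V} {l r : ℕ} {g : ℕ → V} (h : NBW G l g) (hr : l ≤ r)
    {u : V} (hu : g 0 = u) : ∃ g' : ℕ → gBall G u r, NBW (G.induce (gBall G u r)) l g' ∧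
      ∀ i ≤ l, (g' i : V) = g i := by
  subst hu
  refine ⟨fun i => ⟨g (min i l), walk_mem_ball h.1 (min_le_right _ _) hr⟩, ⟨?_, ?_⟩, ?_⟩
  · intro i hi
    simp only [SimpleGraph.comap_adj]
    have := h.1 i hi
    simpa [min_eq_left hi.le, min_eq_left (Nat.succ_le_of_lt hi)] using this
  · intro i hi
    have := h.2 i hi
    simp only [ne_eq, Subtype.mk.injEq]
    rwa [min_eq_left (by omega), min_eq_left (by omega)]
  · intro i hi
    simp [min_eq_left hi]

lemma two_of_three_G {V : Type*} [Finite V] {G : SimpleGraph V} {r : ℕ} (hbf : BicycleFree G r)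
    {l : ℕ} (hl : l ≤ r) {g1 g2 g3 : ℕ → V} (h1 : NBW G l g1) (h2 : NBW G l g2) (h3 : NBW G l g3)
    (h12 : g1 0 = g2 0) (h13 : g1 0 = g3 0) (e12 : g1 l = g2 l) (e13 : g1 l = g3 l) :
    (∀ i ≤ l, g1 i = g2 i) ∨ (∀ i ≤ l, g1 i = g3 i) ∨ (∀ i ≤ l, g2 i = g3 i) := by
  obtain ⟨T, x, y, hT, hH⟩ := exists_tree (ball_connected G (g1 0) r) (ball_edges hbf (g1 0))
  obtain ⟨f1, a1, b1⟩ := h1.lift hl rfl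
  obtain ⟨f2, a2, b2⟩ := h2.lift hl h12.symm
  obtain ⟨f3, a3, b3⟩ := h3.lift hl h13.symm
  have := two_of_three hT hH a1 a2 a3
    (Subtype.ext (by rw [b1 0 (by omega), b2 0 (by omega), h12]))
    (Subtype.ext (by rw [b1 0 (by omega), b3 0 (by omega), h13]))
    (Subtype.ext (by rw [b1 l le_rfl, b2 l le_rfl, e12]))
    (Subtype.ext (by rw [b1 l le_rfl, b3 l le_rfl, e13]))
  rcases this with h | h | h
  · left; intro i hi; rw [← b1 i hi, ← b2 i hi, h i hi]
  · right; left; intro i hi; rw [← b1 i hi, ← b3 i hi, h i hi]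
  · right; right; intro i hi; rw [← b2 i hi, ← b3 i hi, h i hi]

/-- Bool code for non-backtracking walks between given endpoints. -/
lemma exists_code {V : Type*} [Finite V] {G : SimpleGraph V} {r : ℕ} (hbf : BicycleFree G r)
    {l : ℕ} (hl : l ≤ r) : ∃ c : V → V → (ℕ → V) → Bool, ∀ g g' : ℕ → V, NBW G l g → NBW G l g' →
      g 0 = g' 0 → g l = g' l → c (g 0) (g l) g = c (g' 0) (g' l) g' → ∀ i ≤ l, g i = g' i := by
  classical
  have : ∀ u w : V, ∃ c : (ℕ → V) → Bool, ∀ g g' : ℕ → V, NBW G l g → NBW G l g' →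
      g 0 = u → g' 0 = u → g l = w → g' l = w → c g = c g' → ∀ i ≤ l, g i = g' i := by
    intro u w
    by_cases hex : ∃ g0 : ℕ → V, NBW G l g0 ∧ g0 0 = u ∧ g0 l = w
    · obtain ⟨g0, h0, hu, hw⟩ := hex
      refine ⟨fun g => decide (∀ i ≤ l, g0 i = g i), ?_⟩
      intro g g' h h' a a' b b' hc
      by_cases hg : ∀ i ≤ l, g0 i = g i
      · have hg' : ∀ i ≤ l, g0 i = g' i := by
          exact (decide_eq_decide.1 hc).1 hg
        intro i hi
        rw [← hg i hi, hg' i hi]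
      · have hg' : ¬ ∀ i ≤ l, g0 i = g' i := by
          intro hcon
          simp only [decide_eq_decide] at hc
          exact hg (hc.2 hcon)
        rcases two_of_three_G hbf hl h0 h h' (hu.trans a.symm) (hu.trans a'.symm)
          (hw.trans b.symm) (hw.trans b'.symm) with h1 | h1 | h1
        · exact absurd h1 hg
        · exact absurd h1 hg'
        · exact h1
    · refine ⟨fun _ => true, ?_⟩
      intro g g' h h' a a' b b' hc
      exact absurd ⟨g, h, a, b⟩ hex
  choose c hc using this
  refine ⟨c, fun g g' h h' h0 hl he => ?_⟩
  refine hc _ _ g g' h h' rfl h0.symm rfl hl.symm ?_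
  rw [he, h0, hl]

lemma shake1 {W : Type*} [Finite W] {H : SimpleGraph W} (hc : H.Connected)
    (hE : H.edgeSet.ncard ≤ Nat.card W) (u : W) :
    {p : W × W | H.Adj u p.1 ∧ H.Adj p.1 p.2 ∧ p.2 ≠ u}.ncard ≤ Nat.card W ∧
    {p : W × W | H.Adj u p.1 ∧ H.Adj p.1 p.2}.ncard ≤ 2 * Nat.card W := by
  classical
  have := Fintype.ofFinite W
  have hD : {p : W × W | H.Adj p.1 p.2}.ncard ≤ 2 * Nat.card W := by
    have h1 := H.dart_card_eq_twice_card_edges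
    rw [← Set.ncard_coe_finset, SimpleGraph.coe_edgeFinset] at h1
    have h2 : {p : W × W | H.Adj p.1 p.2}.ncard ≤ Nat.card H.Dart := by
      rw [← Set.ncard_univ]
      have : {p : W × W | H.Adj p.1 p.2} = (fun d : H.Dart => d.toProd) '' Set.univ := by
        ext p
        simp only [Set.mem_ofPred_eq, Set.image_univ, Set.mem_range]
        exact ⟨fun h => ⟨⟨p, h⟩, rfl⟩, fun ⟨d, hd⟩ => hd ▸ d.adj⟩
      rw [this]
      exact Set.ncard_image_le
    rw [Nat.card_eq_fintype_card] at h2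
    omega
  refine ⟨?_, (Set.ncard_le_ncard (fun p hp => hp.2)).trans hD⟩
  by_cases hn : ∃ v, H.Adj u v
  swap
  · have : {p : W × W | H.Adj u p.1 ∧ H.Adj p.1 p.2 ∧ p.2 ≠ u} = ∅ := by
      ext p
      simp only [Set.mem_ofPred_eq, Set.mem_empty_iff_false, iff_false]
      rintro ⟨h, -⟩
      exact hn ⟨_, h⟩
    rw [this]; simp
  obtain ⟨v, hv⟩ := hn
  have : Nontrivial W := ⟨u, v, hv.ne⟩
  have hq : ∀ x : W, ∃ y, H.Adj x y ∧ (H.Adj u x → y = u) := by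
    intro x
    by_cases hx : H.Adj u x
    · exact ⟨u, hx.symm, fun _ => rfl⟩
    · obtain ⟨y, hy⟩ := hc.preconnected.exists_adj_of_nontrivial x
      exact ⟨y, hy, fun h => absurd h hx⟩
  choose q hq1 hq2 using hq
  have hQ : (Set.range (fun x => (x, q x))).ncard = Nat.card W := by
    rw [← Set.image_univ, Set.ncard_image_of_injective _ (fun a b hab => (Prod.ext_iff.1 hab).1),
      Set.ncard_univ]
  have hdis : Disjoint {p : W × W | H.Adj u p.1 ∧ H.Adj p.1 p.2 ∧ p.2 ≠ u}
      (Set.range (fun x => (x, q x))) := by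
    rw [Set.disjoint_left]
    rintro p ⟨h1, h2, h3⟩ ⟨x, rfl⟩
    exact h3 (hq2 x h1)
  have h5 := Set.ncard_union_eq hdis
  have h6 : ({p : W × W | H.Adj u p.1 ∧ H.Adj p.1 p.2 ∧ p.2 ≠ u} ∪
      (Set.range (fun x => (x, q x)))).ncard ≤ 2 * Nat.card W := by
    refine (Set.ncard_le_ncard ?_).trans hD
    rintro p (hp | ⟨x, rfl⟩)
    · exact hp.2.1
    · exact hq1 x
  omega

lemma shake2 {V : Type*} [Finite V] {G : SimpleGraph V} {r : ℕ} (hr : 2 ≤ r)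
    (hbf : BicycleFree G r) (u : V) :
    {p : V × V | G.Adj u p.1 ∧ G.Adj p.1 p.2 ∧ p.2 ≠ u}.ncard ≤ Nat.card V ∧
    {p : V × V | G.Adj u p.1 ∧ G.Adj p.1 p.2}.ncard ≤ 2 * Nat.card V := by
  have hu : u ∈ gBall G u r := ⟨SimpleGraph.Reachable.refl _, by simp⟩
  obtain ⟨h1, h2⟩ := shake1 (ball_connected G u r) (ball_edges hbf u) ⟨u, hu⟩
  have hm : ∀ p : V × V, G.Adj u p.1 → G.Adj p.1 p.2 → p.1 ∈ gBall G u r ∧ p.2 ∈ gBall G u r := by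
    intro p h3 h4
    refine ⟨⟨h3.reachable, (SimpleGraph.dist_le h3.toWalk).trans ?_⟩,
      ⟨h3.reachable.trans h4.reachable,
        (SimpleGraph.dist_le (SimpleGraph.Walk.cons h3 h4.toWalk)).trans ?_⟩⟩
    · simp; omega
    · simp; omega
  have hB : Nat.card (gBall G u r) ≤ Nat.card V := Finite.card_subtype_le _
  constructor
  · refine le_trans ?_ (h1.trans hB)
    refine le_trans (Set.ncard_le_ncard ?_) (Set.ncard_image_le (f := fun p => (p.1.1, p.2.1)))
    rintro p ⟨h3, h4, h5⟩
    obtain ⟨h6, h7⟩ := hm p h3 h4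
    exact ⟨(⟨p.1, h6⟩, ⟨p.2, h7⟩), ⟨h3, h4, fun h => h5 (congrArg Subtype.val h)⟩, rfl⟩
  · refine le_trans ?_ (h2.trans (Nat.mul_le_mul_left _ hB))
    refine le_trans (Set.ncard_le_ncard ?_) (Set.ncard_image_le (f := fun p => (p.1.1, p.2.1)))
    rintro p ⟨h3, h4⟩
    obtain ⟨h6, h7⟩ := hm p h3 h4
    exact ⟨(⟨p.1, h6⟩, ⟨p.2, h7⟩), ⟨h3, h4⟩, rfl⟩

lemma exists_injOn {A B : Type*} [Finite A] [Finite B] [Nonempty B] (S : Set A)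
    (h : S.ncard ≤ Nat.card B) : ∃ c : A → B, Set.InjOn c S := by
  classical
  have : Nat.card S ≤ Nat.card B := by rwa [Nat.card_coe_set_eq]
  obtain ⟨e⟩ : Nonempty (S ↪ B) := by
    have i1 := Fintype.ofFinite S
    have i2 := Fintype.ofFinite B
    rw [Function.Embedding.nonempty_iff_card_le, ← Nat.card_eq_fintype_card,
      ← Nat.card_eq_fintype_card]
    exact this
  refine ⟨fun a => if ha : a ∈ S then e ⟨a, ha⟩ else Classical.arbitrary B, ?_⟩
  intro a ha b hb hab
  simp only [ha, hb, dif_pos] at hab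
  simpa using e.injective hab

/-- Extension of a hike to all naturals. -/
def xt {V : Type*} {k : ℕ} (f : Fin (2 * k + 1) → V) (i : ℕ) : V :=
  f ⟨min i (2 * k), by omega⟩

lemma xt_eq {V : Type*} {k : ℕ} (f : Fin (2 * k + 1) → V) {i : ℕ} (h : i < 2 * k + 1) :
    xt f i = f ⟨i, h⟩ := by
  unfold xt
  congr 2
  omega

lemma xt_inj {V : Type*} {k : ℕ} {f f' : Fin (2 * k + 1) → V}
    (h : ∀ i ≤ 2 * k, xt f i = xt f' i) : f = f' := by
  funext ⟨i, hi⟩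
  rw [← xt_eq f hi, ← xt_eq f' hi]
  exact h i (by omega)

/-- Hike in function form. -/
def Hk {V : Type*} (G : SimpleGraph V) (k : ℕ) (F : ℕ → V) : Prop :=
  NBW G k F ∧ NBW G k (fun i => F (k + i)) ∧ F (2 * k) = F 0

lemma IsHike.hk {V : Type*} {G : SimpleGraph V} {k : ℕ} {f : Fin (2 * k + 1) → V}
    (h : IsHike G k f) : Hk G k (xt f) := by
  obtain ⟨h1, h2, h3⟩ := h
  have a1 : ∀ i < 2 * k, G.Adj (xt f i) (xt f (i + 1)) := by
    intro i hi
    rw [xt_eq f (by omega), xt_eq f (by omega)]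
    exact h1 i hi
  have a3 : ∀ i, 1 ≤ i → i < 2 * k → i ≠ k → xt f (i + 1) ≠ xt f (i - 1) := by
    intro i hi hi' hk
    rw [xt_eq f (by omega), xt_eq f (by omega)]
    exact h3 i hi hi' hk
  refine ⟨⟨fun i hi => a1 i (by omega), fun i hi => ?_⟩,
    ⟨fun i hi => a1 (k + i) (by omega), fun i hi => ?_⟩, ?_⟩
  · exact a3 (i + 1) (by omega) (by omega) (by omega)
  · exact a3 (k + i + 1) (by omega) (by omega) (by omega)
  · rw [xt_eq f (by omega), xt_eq f (by omega)]
    exact h2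

lemma count_code {V X : Type*} [Finite X] {k : ℕ} (S : Set (Fin (2 * k + 1) → V))
    (Φ : (ℕ → V) → X)
    (h : ∀ f ∈ S, ∀ f' ∈ S, Φ (xt f) = Φ (xt f') → ∀ i ≤ 2 * k, xt f i = xt f' i) :
    S.ncard ≤ Nat.card X := by
  rw [← Set.ncard_univ]
  exact Set.ncard_le_ncard_of_injOn (fun f => Φ (xt f)) (fun _ _ => Set.mem_univ _)
    (fun f hf f' hf' he => xt_inj (h f hf f' hf' he))

lemma chain_agree {V : Type*} {G : SimpleGraph V} {r : ℕ} (hr : 1 ≤ r)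
    {c : V → V → (ℕ → V) → Bool}
    (hc : ∀ g g' : ℕ → V, NBW G r g → NBW G r g' →
      g 0 = g' 0 → g r = g' r → c (g 0) (g r) g = c (g' 0) (g' r) g' → ∀ i ≤ r, g i = g' i)
    {q : ℕ} {g g' : ℕ → V} (h : NBW G (q * r) g) (h' : NBW G (q * r) g')
    (he : ∀ j ≤ q, g (j * r) = g' (j * r))
    (hcode : ∀ j < q, c (g (j * r)) (g (j * r + r)) (fun i => g (j * r + i)) =
      c (g' (j * r)) (g' (j * r + r)) (fun i => g' (j * r + i))) :
    ∀ i ≤ q * r, g i = g' i := by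
  intro i hi
  have hdm : i / r * r + i % r = i := Nat.div_add_mod' i r
  have hlt := Nat.mod_lt i (show 0 < r by omega)
  have hjq : i / r ≤ q := Nat.div_le_of_le_mul (by rwa [mul_comm])
  rcases hjq.lt_or_eq with hj | hj
  · have hle : i / r * r + r ≤ q * r := by
      have := Nat.mul_le_mul_right r (Nat.succ_le_of_lt hj)
      rwa [Nat.succ_mul] at this
    have := hc (fun a => g (i / r * r + a)) (fun a => g' (i / r * r + a))
      (h.sub _ _ hle) (h'.sub _ _ hle) (he _ hjq)
      (by have := he (i / r + 1) (by omega)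
          rwa [Nat.succ_mul] at this) (hcode _ hj) (i % r) hlt.le
    simpa only [hdm] using this
  · have : i = q * r := by rw [hj] at hdm; omega
    rw [this]
    exact he q le_rfl

lemma main_count {V X : Type*} [Fintype V] [Finite X] {G : SimpleGraph V} {r k p s : ℕ}
    (hr : 1 ≤ r) (hbf : BicycleFree G r) (hk : k = (p + 1) * r + s)
    (S : Set (Fin (2 * k + 1) → V)) (hS : ∀ f ∈ S, IsHike G k f)
    (m : V → (ℕ → V) → X)
    (hm : ∀ g g' : ℕ → V, NBW G s g → NBW G s (fun i => g (s + i)) → NBW G s g' →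
      NBW G s (fun i => g' (s + i)) → g 0 = g' 0 → m (g 0) g = m (g' 0) g' →
      ∀ i ≤ 2 * s, g i = g' i) :
    S.ncard ≤ Fintype.card V ^ (2 * p + 2) * 4 ^ (p + 1) * Nat.card X := by
  obtain ⟨c, hc⟩ := exists_code hbf (le_refl r)
  set q := p + 1 with hq
  let Φ : (ℕ → V) → (Fin (q + 1) → V) × (Fin q → Bool) × X × (Fin p → V) × (Fin q → Bool) :=
    fun F => (fun j => F (j.1 * r),
      fun j => c (F (j.1 * r)) (F (j.1 * r + r)) (fun i => F (j.1 * r + i)),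
      m (F (q * r)) (fun i => F (q * r + i)),
      fun j => F (k + (s + (j.1 + 1) * r)),
      fun j => c (F (k + (s + j.1 * r))) (F (k + (s + (j.1 * r + r))))
        (fun i => F (k + (s + (j.1 * r + i)))))
  have key := count_code S Φ ?_
  · refine key.trans (le_of_eq ?_)
    simp only [Nat.card_prod, Nat.card_eq_fintype_card, Fintype.card_prod, Fintype.card_pi, Finset.prod_const,
      Finset.card_univ, Fintype.card_fin, Fintype.card_bool]
    rw [show (4 : ℕ) = 2 * 2 by norm_num, mul_pow, hq]
    ring
  · intro f hf f' hf' he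
    obtain ⟨a1, a2, a3⟩ := (hS f hf).hk
    obtain ⟨b1, b2, b3⟩ := (hS f' hf').hk
    generalize xt f = F at *
    generalize xt f' = F' at *
    simp only [Φ, Prod.mk.injEq, funext_iff, Fin.forall_iff] at he
    obtain ⟨e1, e2, e3, e4, e5⟩ := he
    have r1 : ∀ i ≤ q * r, F i = F' i := by
      refine chain_agree hr hc (by simpa using a1.sub 0 (q * r) (by omega))
        (by simpa using b1.sub 0 (q * r) (by omega)) (fun j hj => e1 j (by omega)) ?_
      exact fun j hj => e2 j hj
    have r2 : ∀ i ≤ 2 * s, F (q * r + i) = F' (q * r + i) := by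
      refine hm (fun i => F (q * r + i)) (fun i => F' (q * r + i)) (a1.sub _ _ (by omega)) ?_
        (b1.sub _ _ (by omega)) ?_ (r1 _ le_rfl) e3
      · have := a2.sub 0 s (by omega)
        simpa [hk, add_assoc] using this
      · have := b2.sub 0 s (by omega)
        simpa [hk, add_assoc] using this
    have r3 : ∀ i ≤ q * r, F (k + (s + i)) = F' (k + (s + i)) := by
      refine chain_agree (g := fun i => F (k + (s + i))) (g' := fun i => F' (k + (s + i)))
        hr hc (a2.sub s (q * r) (by omega)) (b2.sub s (q * r) (by omega)) ?_ (fun j hj => e5 j hj)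
      intro j hj
      rcases Nat.eq_zero_or_pos j with rfl | hj0
      · have := r2 (2 * s) le_rfl
        rw [show q * r + 2 * s = k + (s + 0 * r) by omega] at this
        exact this
      · rcases hj.lt_or_eq with hj1 | rfl
        · have := e4 (j - 1) (by omega)
          rwa [show j - 1 + 1 = j by omega] at this
        · change F (k + (s + q * r)) = F' (k + (s + q * r))
          rw [show k + (s + q * r) = 2 * k by omega, a3, b3]
          exact r1 0 (by omega)
    intro i hi
    by_cases h1 : i ≤ q * r
    · exact r1 i h1
    · by_cases h2 : i ≤ q * r + 2 * s
      · have := r2 (i - q * r) (by omega)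
        rwa [show q * r + (i - q * r) = i by omega] at this
      · have := r3 (i - (k + s)) (by omega)
        rwa [show k + (s + (i - (k + s))) = i by omega] at this

/-- middle code, generic -/
lemma mid4 {V : Type*} [Finite V] {G : SimpleGraph V} {r s : ℕ}
    (hbf : BicycleFree G r) (hs : s ≤ r) : ∃ m : V → (ℕ → V) → (V × V × Bool × Bool),
    ∀ g g' : ℕ → V, NBW G s g → NBW G s (fun i => g (s + i)) → NBW G s g' →
      NBW G s (fun i => g' (s + i)) → g 0 = g' 0 → m (g 0) g = m (g' 0) g' →
      ∀ i ≤ 2 * s, g i = g' i := by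
  obtain ⟨c, hc⟩ := exists_code hbf hs
  refine ⟨fun _ g => (g s, g (s + s), c (g 0) (g s) g, c (g s) (g (s + s)) (fun i => g (s + i))), ?_⟩
  intro g g' h1 h2 h1' h2' h0 he
  simp only [Prod.mk.injEq] at he
  obtain ⟨e1, e2, e3, e4⟩ := he
  intro i hi
  by_cases his : i ≤ s
  · exact hc g g' h1 h1' h0 e1 e3 i his
  · have := hc _ _ h2 h2' e1 e2 e4 (i - s) (by omega)
    simpa only [show s + (i - s) = i by omega] using this

/-- middle code, `s ≤ 2` -/
lemma mid1 {V : Type*} [Finite V] [Nonempty V] {G : SimpleGraph V} {r s : ℕ} (hr : 2 ≤ r)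
    (hbf : BicycleFree G r) (hs : s ≤ 2) : ∃ m : V → (ℕ → V) → (V × V),
    ∀ g g' : ℕ → V, NBW G s g → NBW G s (fun i => g (s + i)) → NBW G s g' →
      NBW G s (fun i => g' (s + i)) → g 0 = g' 0 → m (g 0) g = m (g' 0) g' →
      ∀ i ≤ 2 * s, g i = g' i := by
  have key : ∃ d : V → (ℕ → V) → V, ∀ g g' : ℕ → V, NBW G s g → NBW G s g' → g 0 = g' 0 →
      d (g 0) g = d (g' 0) g' → ∀ i ≤ s, g i = g' i := by
    by_cases hs2 : s = 2
    · subst hs2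
      have := fun u => exists_injOn (B := V) _ (shake2 hr hbf u).1
      choose d hd using this
      refine ⟨fun u g => d u (g 1, g 2), ?_⟩
      intro g g' h h' h0 he
      rw [← h0] at he
      have := hd (g 0) (x₁ := (g 1, g 2)) (x₂ := (g' 1, g' 2))
        ⟨h.1 0 (by omega), h.1 1 (by omega), h.2 0 (by omega)⟩
        ⟨by rw [h0]; exact h'.1 0 (by omega), h'.1 1 (by omega), by rw [h0]; exact h'.2 0 (by omega)⟩
        he
      simp only [Prod.mk.injEq] at this
      intro i hi
      interval_cases i
      · exact h0
      · exact this.1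
      · exact this.2
    · refine ⟨fun _ g => g s, ?_⟩
      intro g g' h h' h0 he i hi
      rcases Nat.eq_zero_or_pos i with rfl | hi0
      · exact h0
      · obtain rfl : i = s := by omega
        exact he
  obtain ⟨d, hd⟩ := key
  refine ⟨fun u g => (d u g, d (g s) (fun i => g (s + i))), ?_⟩
  intro g g' h1 h2 h1' h2' h0 he
  simp only [Prod.mk.injEq] at he
  have r1 := hd g g' h1 h1' h0 he.1
  intro i hi
  by_cases his : i ≤ s
  · exact r1 i his
  · have := hd _ _ h2 h2' (r1 s le_rfl) he.2 (i - s) (by omega)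
    simpa only [show s + (i - s) = i by omega] using this

/-- middle code, `r = 2`, `s = 1` -/
lemma mid2 {V : Type*} [Finite V] [Nonempty V] {G : SimpleGraph V} {r : ℕ} (hr : 2 ≤ r)
    (hbf : BicycleFree G r) : ∃ m : V → (ℕ → V) → (Bool × V),
    ∀ g g' : ℕ → V, NBW G 1 g → NBW G 1 (fun i => g (1 + i)) → NBW G 1 g' →
      NBW G 1 (fun i => g' (1 + i)) → g 0 = g' 0 → m (g 0) g = m (g' 0) g' →
      ∀ i ≤ 2 * 1, g i = g' i := by
  have := fun u => exists_injOn (B := Bool × V) _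
    ((shake2 hr hbf u).2.trans (by simp [Nat.card_prod]))
  choose d hd using this
  refine ⟨fun u g => d u (g 1, g 2), ?_⟩
  intro g g' h1 h2 h1' h2' h0 he
  rw [← h0] at he
  have := hd (g 0) (x₁ := (g 1, g 2)) (x₂ := (g' 1, g' 2))
    ⟨h1.1 0 (by omega), h2.1 0 (by omega)⟩
    ⟨by rw [h0]; exact h1'.1 0 (by omega), h2'.1 0 (by omega)⟩ he
  simp only [Prod.mk.injEq] at this
  intro i hi
  interval_cases i
  · exact h0
  · exact this.1
  · exact this.2

/-- The set to be counted. -/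
def HS {V : Type*} [DecidableEq V] (G : SimpleGraph V) (k : ℕ) : Set (Fin (2 * k + 1) → V) :=
  {f : Fin (2 * k + 1) → V | IsHike G k f ∧ IsSingletonFree k f ∧
        Set.range f = Set.univ ∧
        {e : Sym2 V | 0 < edgeCount k f e} = G.edgeSet}

lemma HS.surj {V : Type*} [DecidableEq V] {G : SimpleGraph V} {k : ℕ} {f : Fin (2 * k + 1) → V}
    (h : f ∈ HS G k) (v : V) : ∃ i ≤ 2 * k, xt f i = v := by
  obtain ⟨-, -, h3, -⟩ := h
  obtain ⟨⟨i, hi⟩, rfl⟩ := h3.ge (Set.mem_univ v)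
  exact ⟨i, by omega, xt_eq f hi⟩

lemma HS.adj {V : Type*} [DecidableEq V] {G : SimpleGraph V} {k : ℕ} {f : Fin (2 * k + 1) → V}
    (h : f ∈ HS G k) : ∀ i < 2 * k, G.Adj (xt f i) (xt f (i + 1)) := by
  intro i hi
  rw [xt_eq f (by omega), xt_eq f (by omega)]
  exact h.1.1 i hi

lemma HS.ball {V : Type*} [DecidableEq V] {G : SimpleGraph V} {k : ℕ} {f : Fin (2 * k + 1) → V}
    (h : f ∈ HS G k) {r : ℕ} (hr : 2 * k ≤ r) : gBall G (xt f 0) r = Set.univ := by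
  rw [Set.eq_univ_iff_forall]
  intro v
  obtain ⟨i, hi, rfl⟩ := HS.surj h v
  exact walk_mem_ball (HS.adj h) hi hr

lemma HS.conn {V : Type*} [DecidableEq V] {G : SimpleGraph V} {k : ℕ} {f : Fin (2 * k + 1) → V}
    (h : f ∈ HS G k) : G.Connected := by
  have h0 : ∀ v, G.Reachable (xt f 0) v := fun v => by
    have : v ∈ gBall G (xt f 0) (2 * k) := by rw [HS.ball h le_rfl]; trivial
    exact this.1
  have : Nonempty V := ⟨xt f 0⟩
  exact ⟨fun a b => (h0 a).symm.trans (h0 b)⟩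

lemma HS.edges {V : Type*} [Fintype V] [DecidableEq V] {G : SimpleGraph V} {k : ℕ}
    {f : Fin (2 * k + 1) → V} (h : f ∈ HS G k) : G.edgeSet.ncard ≤ k := by
  classical
  obtain ⟨h1, h2, -, h4⟩ := h
  have key := Finset.card_eq_sum_card_fiberwise (s := (Finset.univ : Finset (Fin (2 * k))))
    (t := G.edgeFinset)
    (f := fun i : Fin (2 * k) =>
      s(f ⟨i.1, Nat.lt_succ_of_lt i.2⟩, f ⟨i.1 + 1, Nat.succ_lt_succ i.2⟩)) (by
      intro i _
      simpa using h1.1 i.1 i.2)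
  have h5 : ∀ e ∈ G.edgeFinset, 2 ≤ (Finset.univ.filter fun i : Fin (2 * k) =>
      s(f ⟨i.1, Nat.lt_succ_of_lt i.2⟩, f ⟨i.1 + 1, Nat.succ_lt_succ i.2⟩) = e).card := by
    intro e he
    have a1 : e ∈ {e : Sym2 V | 0 < edgeCount k f e} := by
      rw [h4]; simpa using he
    have a1 : 0 < edgeCount k f e := a1
    have a2 := h2 e
    have a3 : 2 ≤ edgeCount k f e := by omega
    unfold edgeCount at a3
    convert a3
  have h6 := Finset.card_nsmul_le_sum _ _ _ h5
  rw [← key] at h6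
  simp only [Finset.card_univ, Fintype.card_fin, smul_eq_mul] at h6
  rw [← SimpleGraph.coe_edgeFinset, Set.ncard_coe_finset]
  omega

lemma HS.verts {V : Type*} [Fintype V] [DecidableEq V] {G : SimpleGraph V} {k : ℕ}
    {f : Fin (2 * k + 1) → V} (h : f ∈ HS G k) :
    Fintype.card V ≤ G.edgeSet.ncard + 1 := by
  have := (HS.conn h).card_vert_le_card_edgeSet_add_one
  rwa [Nat.card_eq_fintype_card, Nat.card_coe_set_eq] at this

lemma NBW.rev {V : Type*} {G : SimpleGraph V} {k : ℕ} {F : ℕ → V}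
    (h : NBW G k (fun i => F (k + i))) : NBW G k (fun i => F (2 * k - i)) := by
  refine ⟨fun i hi => ?_, fun i hi => ?_⟩
  · have := (h.1 (k - (i + 1)) (by omega)).symm
    beta_reduce at this ⊢
    rwa [show k + (k - (i + 1)) = 2 * k - (i + 1) by omega,
      show k + (k - (i + 1) + 1) = 2 * k - i by omega] at this
  · have := (h.2 (k - (i + 2)) (by omega)).symm
    beta_reduce at this ⊢
    rwa [show k + (k - (i + 2)) = 2 * k - (i + 2) by omega,
      show k + (k - (i + 2) + 2) = 2 * k - i by omega] at this

lemma deg2_agree {V : Type*} [Finite V] {G : SimpleGraph V} (hd : ∀ v, (G.neighborSet v).ncard ≤ 2)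
    {k : ℕ} {g g' : ℕ → V} (h : NBW G k g) (h' : NBW G k g') (h0 : g 0 = g' 0) (h1 : g 1 = g' 1) :
    ∀ i ≤ k, g i = g' i := by
  intro i
  induction i using Nat.strong_induction_on with
  | _ i ih =>
    intro hi
    match i with
    | 0 => exact h0
    | 1 => exact h1
    | i + 2 =>
      have e0 := ih i (by omega) (by omega)
      have e1 := ih (i + 1) (by omega) (by omega)
      by_contra hne
      have a1 := h.1 i (by omega)
      have a2 := h.1 (i + 1) (by omega)
      have a3 := h'.1 (i + 1) (by omega)
      have b1 := h.2 i (by omega)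
      have b2 := h'.2 i (by omega)
      rw [← e1] at a3
      rw [← e0] at b2
      have hsub : ({g i, g (i + 2), g' (i + 2)} : Set V) ⊆ G.neighborSet (g (i + 1)) := by
        intro z hz
        rcases hz with rfl | rfl | rfl
        · exact a1.symm
        · exact a2
        · exact a3
      have := (Set.ncard_le_ncard hsub).trans (hd _)
      rw [Set.ncard_eq_three.2 ⟨_, _, _, b1.symm, b2.symm, hne, rfl⟩] at this
      omega

lemma small_case {V : Type*} [Fintype V] [DecidableEq V] {G : SimpleGraph V} {r k : ℕ}
    (hk : 1 ≤ k) (hkr : 2 * k ≤ r) (hbf : BicycleFree G r) (hne : (HS G k).Nonempty) :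
    (HS G k).ncard ≤ r * Fintype.card V := by
  classical
  obtain ⟨f0, hf0⟩ := hne
  have hconn := HS.conn hf0
  have hE := HS.edges hf0
  have hV := HS.verts hf0
  have hEn : G.edgeSet.ncard ≤ Fintype.card V := by
    have := hbf (xt f0 0)
    rw [HS.ball hf0 hkr] at this
    simpa [Set.ncard_univ, Nat.card_eq_fintype_card] using this
  set n := Fintype.card V with hn
  have hn2 : 2 ≤ n := by
    have := (HS.adj hf0 0 (by omega)).ne
    have : Nontrivial V := ⟨_, _, this⟩
    exact Fintype.one_lt_card
  rcases hEn.lt_or_eq with hlt | heq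
  · have hT : G.IsTree := by
      rw [SimpleGraph.isTree_iff_connected_and_card]
      refine ⟨hconn, ?_⟩
      rw [Nat.card_coe_set_eq, Nat.card_eq_fintype_card]
      omega
    have := count_code (HS G k) (fun F => (F 0, F k)) (by
      intro f hf f' hf' he
      obtain ⟨a1, a2, a3⟩ := hf.1.hk
      obtain ⟨b1, b2, b3⟩ := hf'.1.hk
      simp only [Prod.mk.injEq] at he
      intro i hi
      by_cases hik : i ≤ k
      · exact tree_unique hT.isAcyclic a1 b1 he.1 he.2 i hik
      · have := tree_unique hT.isAcyclic a2 b2 he.2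
          (by rw [← two_mul, a3, b3]; exact he.1) (i - k) (by omega)
        rwa [show k + (i - k) = i by omega] at this)
    rw [Nat.card_prod, Nat.card_eq_fintype_card] at this
    exact this.trans (Nat.mul_le_mul_right _ (by omega))
  · have hdn : ∀ v, (G.neighborSet v).ncard = G.degree v := fun v => by
      rw [← SimpleGraph.card_neighborFinset_eq_degree, ← Set.ncard_coe_finset,
        SimpleGraph.coe_neighborFinset]
    by_cases hd : ∀ v, (G.neighborSet v).ncard ≤ 2
    · have := fun u => exists_injOn (B := Bool) (G.neighborSet u) (by simpa using hd u)
      choose b hb using this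
      have := count_code (HS G k) (fun F => (F 0, b (F 0) (F 1), b (F 0) (F (2 * k - 1)))) (by
        intro f hf f' hf' he
        obtain ⟨a1, a2, a3⟩ := hf.1.hk
        obtain ⟨b1, b2, b3⟩ := hf'.1.hk
        have a4 := a2.rev
        have b4 := b2.rev
        simp only [Prod.mk.injEq] at he
        obtain ⟨e0, e1, e2⟩ := he
        rw [← e0] at e1 e2
        have c1 : xt f 1 = xt f' 1 := hb _ (a1.1 0 (by omega))
          (by rw [e0]; exact b1.1 0 (by omega)) e1
        have c2 : xt f (2 * k - 1) = xt f' (2 * k - 1) := by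
          refine hb (xt f 0) ?_ ?_ e2
          · have := a4.1 0 (by omega)
            beta_reduce at this
            rw [Nat.sub_zero, a3] at this
            exact this
          · have := b4.1 0 (by omega)
            beta_reduce at this
            rw [Nat.sub_zero, b3, ← e0] at this
            exact this
        intro i hi
        by_cases hik : i ≤ k
        · exact deg2_agree hd a1 b1 e0 c1 i hik
        · have := deg2_agree hd a4 b4 (by rw [Nat.sub_zero, a3, b3]; exact e0) c2 (2 * k - i)
            (by omega)
          rwa [show 2 * k - (2 * k - i) = i by omega] at this)
      simp only [Nat.card_eq_fintype_card, Fintype.card_prod, Fintype.card_bool] at this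
      rw [← hn] at this
      have : n * 4 ≤ r * n := by rw [mul_comm]; exact Nat.mul_le_mul_right _ (by omega)
      omega
    · push Not at hd
      obtain ⟨v, hv⟩ := hd
      rw [hdn] at hv
      have hlt := G.degree_lt_card_verts v
      have hsum := G.sum_degrees_eq_twice_card_edges
      rw [← Set.ncard_coe_finset, SimpleGraph.coe_edgeFinset, heq] at hsum
      have hleaf : ∃ x, G.degree x ≤ 1 := by
        by_contra hcon
        push Not at hcon
        have : ∑ x : V, 2 < ∑ x, G.degree x :=
          Finset.sum_lt_sum (fun x _ => hcon x) ⟨v, Finset.mem_univ _, hv⟩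
        simp only [Finset.sum_const, Finset.card_univ, smul_eq_mul] at this
        omega
      obtain ⟨x, hx⟩ := hleaf
      have hx0 : ∀ f ∈ HS G k, xt f 0 ≠ x → xt f k = x := by
        intro f hf h0
        obtain ⟨a1, a2, a3⟩ := hf.1.hk
        obtain ⟨i, hi, hix⟩ := HS.surj hf x
        by_contra hkx
        have i0 : i ≠ 0 := by rintro rfl; exact h0 hix
        have i1 : i ≠ k := by rintro rfl; exact hkx hix
        have i2 : i ≠ 2 * k := by rintro rfl; exact h0 (a3 ▸ hix)
        have hne : xt f (i + 1) ≠ xt f (i - 1) := by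
          rcases lt_or_gt_of_ne i1 with h | h
          · have := a1.2 (i - 1) (by omega)
            rwa [show i - 1 + 2 = i + 1 by omega] at this
          · have := a2.2 (i - 1 - k) (by omega)
            beta_reduce at this
            rwa [show k + (i - 1 - k + 2) = i + 1 by omega,
              show k + (i - 1 - k) = i - 1 by omega] at this
        have n1 := HS.adj hf i (by omega)
        have n2 := HS.adj hf (i - 1) (by omega)
        rw [show i - 1 + 1 = i by omega] at n2
        rw [hix] at n1 n2
        rw [← hdn, Set.ncard_le_one_iff] at hx
        exact hne (hx n1 n2.symm)
      obtain ⟨c, hc⟩ := exists_code hbf (show k ≤ r by omega)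
      have := count_code (HS G k) (fun F => (decide (F 0 = x), (if F 0 = x then F k else F 0),
          c (F 0) (F k) F, c (F k) (F (k + k)) (fun i => F (k + i)))) (by
        intro f hf f' hf' he
        obtain ⟨a1, a2, a3⟩ := hf.1.hk
        obtain ⟨b1, b2, b3⟩ := hf'.1.hk
        simp only [Prod.mk.injEq, decide_eq_decide] at he
        obtain ⟨e0, e1, e2, e3⟩ := he
        have e4 : xt f 0 = xt f' 0 ∧ xt f k = xt f' k := by
          by_cases h : xt f 0 = x
          · have h' := e0.1 h
            rw [if_pos h, if_pos h'] at e1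
            exact ⟨h.trans h'.symm, e1⟩
          · have h' := fun h' => h (e0.2 h')
            rw [if_neg h, if_neg h'] at e1
            exact ⟨e1, (hx0 f hf h).trans (hx0 f' hf' h').symm⟩
        intro i hi
        by_cases hik : i ≤ k
        · exact hc _ _ a1 b1 e4.1 e4.2 e2 i hik
        · have := hc _ _ a2 b2 e4.2
            (by rw [← two_mul, a3, b3]; exact e4.1) e3 (i - k) (by omega)
          rwa [show k + (i - k) = i by omega] at this)
      simp only [Nat.card_eq_fintype_card, Fintype.card_prod, Fintype.card_bool] at this
      rw [← hn] at this
      have : n * 8 ≤ r * n := by rw [mul_comm]; exact Nat.mul_le_mul_right _ (by omega)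
      omega

lemma small_good {V : Type*} [Fintype V] [DecidableEq V] {G : SimpleGraph V} {r k : ℕ}
    (hkr : k ≤ r) (hbf : BicycleFree G r) :
    (HS G k).ncard ≤ 4 * Fintype.card V ^ 2 := by
  classical
  obtain ⟨c, hc⟩ := exists_code hbf hkr
  have := count_code (HS G k) (fun F => (F 0, F k,
      c (F 0) (F k) F, c (F k) (F (k + k)) (fun i => F (k + i)))) (by
    intro f hf f' hf' he
    obtain ⟨a1, a2, a3⟩ := hf.1.hk
    obtain ⟨b1, b2, b3⟩ := hf'.1.hk
    simp only [Prod.mk.injEq] at he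
    obtain ⟨e0, e1, e2, e3⟩ := he
    intro i hi
    by_cases hik : i ≤ k
    · exact hc _ _ a1 b1 e0 e1 e2 i hik
    · have := hc _ _ a2 b2 e1
        (by rw [← two_mul, a3, b3]; exact e0) e3 (i - k) (by omega)
      rwa [show k + (i - k) = i by omega] at this)
  simp only [Nat.card_eq_fintype_card, Fintype.card_prod, Fintype.card_bool] at this
  refine this.trans (le_of_eq ?_)
  ring

lemma ar1a (p : ℕ) : 4 ^ p * (12 * p + 20) ≤ 27 * 9 ^ p := by
  induction p with
  | zero => norm_num
  | succ p ih =>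
    have h : 0 < 4 ^ p := by positivity
    rw [pow_succ, pow_succ]
    nlinarith

lemma ar1b (p : ℕ) : p + 2 ≤ 4 ^ (p + 1) := by
  induction p with
  | zero => norm_num
  | succ p ih => rw [pow_succ]; omega

lemma ar2a (p : ℕ) : 4 * p + 7 ≤ 9 ^ (p + 1) := by
  induction p with
  | zero => norm_num
  | succ p ih => rw [pow_succ]; omega

lemma ar1 {r p s n : ℕ} (hr : 3 ≤ r) (hs : s ≤ 2) (hsr : 2 * s ≤ r)
    (hn : n ≤ (p + 1) * r + s + 1) : 4 ^ (p + 1) * n ≤ r ^ (2 * p + 3) := by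
  rcases hr.eq_or_lt with rfl | hr
  · have h1 := ar1a p
    have h2 : n ≤ 3 * p + 5 := by omega
    have h3 : 3 ^ (2 * p + 3) = 27 * 9 ^ p := by
      rw [pow_add, pow_mul]; norm_num; ring
    rw [h3]
    calc 4 ^ (p + 1) * n ≤ 4 ^ (p + 1) * (3 * p + 5) := Nat.mul_le_mul_left _ h2
      _ = 4 ^ p * (12 * p + 20) := by ring
      _ ≤ _ := h1
  · have h1 := ar1b p
    have h2 : n ≤ r * 4 ^ (p + 1) := by
      calc n ≤ (p + 1) * r + 4 := by omega
        _ ≤ r * (p + 2) := by nlinarith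
        _ ≤ _ := Nat.mul_le_mul_left _ h1
    calc 4 ^ (p + 1) * n ≤ 4 ^ (p + 1) * (r * 4 ^ (p + 1)) := Nat.mul_le_mul_left _ h2
      _ = r * (4 * 4) ^ (p + 1) := by rw [mul_pow]; ring
      _ ≤ r * (r * r) ^ (p + 1) := by gcongr <;> omega
      _ = r ^ (2 * p + 3) := by rw [← pow_two, ← pow_mul]; ring

lemma ar2 {r p s n : ℕ} (hr : 6 ≤ r) (hsr : 2 * s ≤ r)
    (hn : n ≤ (p + 1) * r + s + 1) : 4 ^ (p + 2) * n ≤ r ^ (2 * p + 3) := by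
  have h1 := ar2a p
  have h2 : 4 * n ≤ r * 9 ^ (p + 1) := by
    calc 4 * n ≤ r * (4 * p + 7) := by nlinarith
      _ ≤ _ := Nat.mul_le_mul_left _ h1
  calc 4 ^ (p + 2) * n = 4 ^ (p + 1) * (4 * n) := by ring
    _ ≤ 4 ^ (p + 1) * (r * 9 ^ (p + 1)) := Nat.mul_le_mul_left _ h2
    _ = r * (6 * 6) ^ (p + 1) := by
      rw [show 6 * 6 = 4 * 9 by norm_num, mul_pow]; ring
    _ ≤ r * (r * r) ^ (p + 1) := by gcongr
    _ = r ^ (2 * p + 3) := by rw [← pow_two, ← pow_mul]; ring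

lemma bound_bad {V : Type*} [Fintype V] [DecidableEq V] {G : SimpleGraph V} {r k q s : ℕ}
    (hr : 2 ≤ r) (hbf : BicycleFree G r) (hk : k = q * r + s) (hs : 1 ≤ s) (hsr : 2 * s ≤ r)
    (hne : (HS G k).Nonempty) :
    (HS G k).ncard ≤ (r * Fintype.card V) ^ (2 * q + 1) := by
  have hV : Fintype.card V ≤ k + 1 := by
    obtain ⟨f, hf⟩ := hne
    have h1 := HS.verts hf
    have h2 := HS.edges hf
    omega
  have hnon : Nonempty V := by
    obtain ⟨f, hf⟩ := hne
    exact ⟨xt f 0⟩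
  match q with
  | 0 =>
    have := small_case (r := r) (by omega) (by omega) hbf hne
    simpa using this
  | p + 1 =>
    have hS : ∀ f ∈ HS G k, IsHike G k f := fun f hf => hf.1
    rcases hr.eq_or_lt with rfl | hr3
    · obtain rfl : s = 1 := by omega
      obtain ⟨m, hm⟩ := mid2 le_rfl hbf
      refine (main_count (by omega) hbf hk _ hS m hm).trans (le_of_eq ?_)
      rw [Nat.card_prod, Nat.card_eq_fintype_card, Nat.card_eq_fintype_card, Fintype.card_bool,
        show (4 : ℕ) = 2 * 2 by norm_num, mul_pow, mul_pow]
      ring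
    · by_cases hs2 : s ≤ 2
      · obtain ⟨m, hm⟩ := mid1 hr hbf hs2
        refine (main_count (by omega) hbf hk _ hS m hm).trans ?_
        rw [Nat.card_prod, Nat.card_eq_fintype_card]
        have h1 := ar1 (p := p) (n := Fintype.card V) hr3 hs2 hsr (by omega)
        calc Fintype.card V ^ (2 * p + 2) * 4 ^ (p + 1) * (Fintype.card V * Fintype.card V)
            = (4 ^ (p + 1) * Fintype.card V) * Fintype.card V ^ (2 * p + 3) := by ring
          _ ≤ r ^ (2 * p + 3) * Fintype.card V ^ (2 * p + 3) := Nat.mul_le_mul_right _ h1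
          _ = _ := by rw [← mul_pow]; ring
      · obtain ⟨m, hm⟩ := mid4 (s := s) hbf (by omega)
        refine (main_count (by omega) hbf hk _ hS m hm).trans ?_
        simp only [Nat.card_eq_fintype_card, Fintype.card_prod, Fintype.card_bool]
        have h1 := ar2 (r := r) (s := s) (p := p) (n := Fintype.card V) (by omega) hsr (by omega)
        calc Fintype.card V ^ (2 * p + 2) * 4 ^ (p + 1) *
              (Fintype.card V * (Fintype.card V * (2 * 2)))
            = (4 ^ (p + 2) * Fintype.card V) * Fintype.card V ^ (2 * p + 3) := by ring
          _ ≤ r ^ (2 * p + 3) * Fintype.card V ^ (2 * p + 3) := Nat.mul_le_mul_right _ h1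
          _ = _ := by rw [← mul_pow]; ring

lemma bound_good {V : Type*} [Fintype V] [DecidableEq V] {G : SimpleGraph V} {r k q s : ℕ}
    (hr : 2 ≤ r) (hbf : BicycleFree G r) (hk : k = q * r + s) (hsr : s ≤ r) :
    (HS G k).ncard ≤ (r * Fintype.card V) ^ (2 * q + 2) := by
  have h2 : (2 * Fintype.card V) ^ (2 * q + 2) ≤ (r * Fintype.card V) ^ (2 * q + 2) := by gcongr
  refine le_trans ?_ h2
  match q with
  | 0 =>
    refine (small_good (r := r) (by omega) hbf).trans (le_of_eq ?_)
    ring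
  | p + 1 =>
    obtain ⟨m, hm⟩ := mid4 (s := s) hbf (by omega)
    refine (main_count (by omega) hbf hk _ (fun f hf => hf.1) m hm).trans (le_of_eq ?_)
    simp only [Nat.card_eq_fintype_card, Fintype.card_prod, Fintype.card_bool]
    rw [mul_pow, show (4 : ℕ) = 2 * 2 by norm_num, mul_pow]
    ring

lemma bound_one {V : Type*} [Fintype V] [DecidableEq V] {G : SimpleGraph V} {k : ℕ} (hk : 1 ≤ k) :
    (HS G k).ncard ≤ Fintype.card V ^ (2 * k) := by
  have := count_code (HS G k) (fun F (i : Fin (2 * k)) => F i.1) (by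
    intro f hf f' hf' he i hi
    have e : ∀ i < 2 * k, xt f i = xt f' i := fun i hi => congrFun he ⟨i, hi⟩
    rcases hi.lt_or_eq with h | rfl
    · exact e i h
    · rw [hf.1.hk.2.2, hf'.1.hk.2.2]
      exact e 0 (by omega))
  simpa [Nat.card_eq_fintype_card] using this

lemma bound_zero {V : Type*} [Fintype V] [DecidableEq V] {G : SimpleGraph V} :
    (HS G 0).ncard ≤ 1 := by
  rw [Set.ncard_le_one_iff]
  intro f f' hf hf'
  apply xt_inj
  intro i hi
  obtain ⟨j, hj, h⟩ := HS.surj hf (xt f' i)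
  obtain rfl : i = 0 := by omega
  obtain rfl : j = 0 := by omega
  exact h

lemma HS.bound {V : Type*} [Fintype V] [DecidableEq V] (G : SimpleGraph V)
    {r k : ℕ} (hr : 1 ≤ r) (hbf : BicycleFree G r) :
    ((HS G k).ncard : ℝ)
      ≤ ((r * Fintype.card V : ℕ) : ℝ) ^ ⌈(2 * k : ℝ) / (r : ℝ)⌉ := by
  rcases (HS G k).eq_empty_or_nonempty with he | hne
  · rw [he, Set.ncard_empty, Nat.cast_zero]
    positivity
  rcases Nat.eq_zero_or_pos k with rfl | hk
  · simpa using bound_zero (G := G)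
  have fin : ∀ M : ℕ, ⌈(2 * k : ℝ) / (r : ℝ)⌉ = (M : ℤ) →
      (HS G k).ncard ≤ (r * Fintype.card V) ^ M → ((HS G k).ncard : ℝ)
      ≤ ((r * Fintype.card V : ℕ) : ℝ) ^ ⌈(2 * k : ℝ) / (r : ℝ)⌉ := by
    intro M hM h
    rw [hM, zpow_natCast]
    exact_mod_cast h
  have hr0 : (0 : ℝ) < r := by exact_mod_cast hr
  have ceil : ∀ M : ℕ, r * M < 2 * k + r → 2 * k ≤ r * M →
      ⌈(2 * k : ℝ) / (r : ℝ)⌉ = (M : ℤ) := by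
    intro M h1 h2
    have h1' : (r : ℝ) * M < 2 * k + r := by exact_mod_cast h1
    have h2' : (2 * k : ℝ) ≤ r * M := by exact_mod_cast h2
    rw [Int.ceil_eq_iff]
    push_cast
    constructor
    · rw [lt_div_iff₀ hr0]; linarith
    · rw [div_le_iff₀ hr0]; linarith
  rcases hr.eq_or_lt with rfl | hr2
  · exact fin (2 * k) (ceil _ (by omega) (by omega)) (by simpa using bound_one hk)
  have hdm : (k - 1) / r * r + (k - 1) % r = k - 1 := Nat.div_add_mod' (k - 1) r
  have hlt := Nat.mod_lt (k - 1) (show 0 < r by omega)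
  obtain ⟨q, hq⟩ : ∃ q, q = (k - 1) / r := ⟨_, rfl⟩
  obtain ⟨s, hs⟩ : ∃ s, s = (k - 1) % r + 1 := ⟨_, rfl⟩
  rw [← hq] at hdm
  have hks : k = q * r + s := by omega
  by_cases h2 : 2 * s ≤ r
  · refine fin (2 * q + 1) (ceil _ ?_ ?_) (bound_bad hr2 hbf hks (by omega) h2 hne)
    · have : r * (2 * q + 1) = 2 * (q * r) + r := by ring
      omega
    · have : r * (2 * q + 1) = 2 * (q * r) + r := by ring
      omega
  · refine fin (2 * q + 2) (ceil _ ?_ ?_) (bound_good hr2 hbf hks (by omega))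
    · have : r * (2 * q + 2) = 2 * (q * r) + r + r := by ring
      omega
    · have : r * (2 * q + 2) = 2 * (q * r) + r + r := by ring
      omega

/-- The number of singleton-free `k`-hikes whose hike graph is all of `H` is at most
`(r·|V(H)|)^⌈2k/r⌉`, when `H` is bicycle-free at radius `r`. -/
theorem stmt8 {V : Type*} [Fintype V] [DecidableEq V] (G : SimpleGraph V)
    {r k : ℕ} (hr : 1 ≤ r) (hbf : BicycleFree G r) :
    ({f : Fin (2 * k + 1) → V | IsHike G k f ∧ IsSingletonFree k f ∧
        Set.range f = Set.univ ∧
        {e : Sym2 V | 0 < edgeCount k f e} = G.edgeSet}.ncard : ℝ)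
      ≤ ((r * Fintype.card V : ℕ) : ℝ) ^ ⌈(2 * k : ℝ) / (r : ℝ)⌉ := by
  exact HS.bound G hr hbf
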